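/- arXiv:2401.09348 — 12 statements merged into one kernel-verified Lean document; each statement's English description precedes it below -/
import Mathlib

section
/- Let V and W be real inner product spaces, let G : V →ₗ[ℝ] W be a linear map, let Δt > 0, k > 0 be real constants and set c = k⁻¹. Suppose q : ℕ → V, v : ℕ → V and σ : ℕ → W satisfy, for every n ∈ ℕ: (i) the weak leapfrog stress update: for all ξ ∈ W, c⟪ξ, σ(n+1) − σ(n)⟫ = Δt⟪ξ, G(v n)⟫; (ii) the leapfrog (trapezoidal in staggered time) displacement reconstruction q(n+1) = q(n) + Δt • v(n); and (iii) the initial compatibility σ(0) = k • G(q 0). Then σ(n) = k • G(q n) for all n ∈ ℕ. -/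
open scoped RealInnerProductSpace

theorem smul_eq_smul_iff_forall_mul_inner_eq {𝕜 E : Type*} [RCLike 𝕜] [NormedAddCommGroup E]
    [InnerProductSpace 𝕜 E] {a b : 𝕜} {x y : E} :
    a • x = b • y ↔ ∀ ξ : E, a * inner 𝕜 ξ x = b * inner 𝕜 ξ y := by
  rw [ext_iff_inner_left 𝕜]
  simp only [inner_smul_right]

theorem eq_of_zero_eq_of_forall_succ_sub_eq {A : Type*} [AddGroup A] {f g : ℕ → A}
    (zero_eq : f 0 = g 0) (sub_eq : ∀ n, f (n + 1) - f n = g (n + 1) - g n) : f = g := by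
  funext n
  induction n with
  | zero => exact zero_eq
  | succ n ih => rw [← sub_add_cancel (f (n + 1)) (f n), sub_eq, ih, sub_add_cancel]

theorem stmt0_general {𝕜 V W : Type*} [RCLike 𝕜] [AddCommGroup V] [Module 𝕜 V]
    [NormedAddCommGroup W] [InnerProductSpace 𝕜 W]
    (G : V →ₗ[𝕜] W) {Δt : ℕ → 𝕜} {k c : 𝕜} (hk : k ≠ 0) (hc : c = k⁻¹)
    {q v : ℕ → V} {σ : ℕ → W}
    (hσupd : ∀ n : ℕ, ∀ ξ : W,
      c * inner 𝕜 ξ (σ (n + 1) - σ n) = Δt n * inner 𝕜 ξ (G (v n)))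
    (hq : ∀ n : ℕ, q (n + 1) = q n + Δt n • v n)
    (hσ0 : σ 0 = k • G (q 0)) (n : ℕ) :
    σ n = k • G (q n) := by
  refine congrFun (eq_of_zero_eq_of_forall_succ_sub_eq (g := fun n ↦ k • G (q n)) hσ0 ?_) n
  intro n
  have strong_update : k⁻¹ • (σ (n + 1) - σ n) = Δt n • G (v n) :=
    hc ▸ smul_eq_smul_iff_forall_mul_inner_eq.mpr (hσupd n)
  calc
    σ (n + 1) - σ n = k • Δt n • G (v n) := (inv_smul_eq_iff₀ hk).mp strong_update
    _ = k • G (q (n + 1) - q n) := by rw [hq, add_sub_cancel_left, map_smul]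
    _ = k • G (q (n + 1)) - k • G (q n) := by rw [map_sub, smul_sub]

theorem stmt0 {V W : Type*} [NormedAddCommGroup V] [InnerProductSpace ℝ V]
    [NormedAddCommGroup W] [InnerProductSpace ℝ W]
    (G : V →ₗ[ℝ] W) (Δt k c : ℝ) (hΔt : 0 < Δt) (hk : 0 < k) (hc : c = k⁻¹)
    (q v : ℕ → V) (σ : ℕ → W)
    (hσupd : ∀ n : ℕ, ∀ ξ : W, c * ⟪ξ, σ (n + 1) - σ n⟫ = Δt * ⟪ξ, G (v n)⟫)
    (hq : ∀ n : ℕ, q (n + 1) = q n + Δt • v n)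
    (hσ0 : σ 0 = k • G (q 0)) :
    ∀ n : ℕ, σ n = k • G (q n) :=
  stmt0_general G (Δt := fun _ ↦ Δt) hk.ne' hc hσupd hq hσ0
end

section
/- Let V and W be real inner product spaces, G : V →ₗ[ℝ] W a linear map, ρ > 0, k > 0, Δt > 0 real constants and c = k⁻¹. Let q, v : ℕ → V and σ : ℕ → W satisfy the trapezoidal reconstruction q(n+1) = q(n) + Δt • v(n) for all n, the weak stress update (for all n and all ξ ∈ W) c⟪ξ, σ(n+1) − σ(n)⟫ = Δt⟪ξ, G(v n)⟫, and the initial compatibility σ(0) = k • G(q 0). Then the following are equivalent: (a) the mixed leapfrog dynamic equation holds, i.e. for all n ≥ 1 and all ψ ∈ V, ρ⟪ψ, v(n) − v(n−1)⟫ = −Δt⟪G ψ, σ(n)⟫; (b) the Lagrangian Störmer–Verlet dynamic equation holds, i.e. for all n ≥ 1 and all ψ ∈ V, ρ⟪ψ, v(n) − v(n−1)⟫ = −Δt·k⟪G ψ, G(q n)⟫. -/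
open scoped RealInnerProductSpace

/-!
Tested against a fixed stress `ξ`, the weak update says that `⟪ξ, σ⟫` and `k⟪ξ, G q⟫` have the same
increment `k Δt ⟪ξ, G (v n)⟫` in every time step. They agree initially, so Hooke's law
`σ = k G q` persists weakly, and this turns one dynamic equation into the other.
-/

section Recurrence

variable {F M N : Type*} [Add M] [Add N] [FunLike F M N] [AddHomClass F M N]

theorem eq_map_of_succ_eq_add (f : F) {x d : ℕ → M} {y : ℕ → N}
    (hx : ∀ n, x (n + 1) = x n + d n) (hy : ∀ n, y (n + 1) = y n + f (d n))
    (h₀ : y 0 = f (x 0)) (n : ℕ) : y n = f (x n) := by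
  induction n with
  | zero => exact h₀
  | succ n ih => rw [hy, hx, map_add, ih]

end Recurrence

section HookeLaw

variable {K V W : Type*} [Field K] [AddCommGroup V] [Module K V] [AddCommGroup W] [Module K W]

theorem dual_stress_eq_mul_dual_strain (G : V →ₗ[K] W) (ℓ : Module.Dual K W) {k Δt : K}
    (hk : k ≠ 0) {q v : ℕ → V} {σ : ℕ → W} (hq : ∀ n, q (n + 1) = q n + Δt • v n)
    (hσ : ∀ n, k⁻¹ * ℓ (σ (n + 1) - σ n) = Δt * ℓ (G (v n)))
    (hσ₀ : ℓ (σ 0) = k * ℓ (G (q 0))) (n : ℕ) : ℓ (σ n) = k * ℓ (G (q n)) := by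
  have stress_succ (m : ℕ) : ℓ (σ (m + 1)) = ℓ (σ m) + k * ℓ (G (Δt • v m)) :=
    calc ℓ (σ (m + 1))
      _ = ℓ (σ m) + ℓ (σ (m + 1) - σ m) := by rw [map_sub, add_sub_cancel]
      _ = ℓ (σ m) + k * (Δt * ℓ (G (v m))) := by rw [← hσ, mul_inv_cancel_left₀ hk]
      _ = ℓ (σ m) + k * ℓ (G (Δt • v m)) := by rw [map_smul, map_smul, smul_eq_mul]
  exact eq_map_of_succ_eq_add (y := fun m ↦ ℓ (σ m)) (k • ℓ ∘ₗ G) hq stress_succ hσ₀ n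

end HookeLaw

section Equivalence

open scoped InnerProductSpace

theorem stmt1_general {𝕜 V W : Type*} [RCLike 𝕜]
    [SeminormedAddCommGroup V] [InnerProductSpace 𝕜 V]
    [SeminormedAddCommGroup W] [InnerProductSpace 𝕜 W]
    (G : V →ₗ[𝕜] W) (ρ k Δt c : 𝕜) (hk : k ≠ 0) (hc : c = k⁻¹)
    (q v : ℕ → V) (σ : ℕ → W)
    (hq : ∀ n : ℕ, q (n + 1) = q n + Δt • v n)
    (hσupd : ∀ n : ℕ, ∀ ξ : W, c * ⟪ξ, σ (n + 1) - σ n⟫_𝕜 = Δt * ⟪ξ, G (v n)⟫_𝕜)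
    (hσ0 : ∀ ξ : W, ⟪ξ, σ 0⟫_𝕜 = k * ⟪ξ, G (q 0)⟫_𝕜) :
    (∀ n : ℕ, 1 ≤ n → ∀ ψ : V,
        ρ * ⟪ψ, v n - v (n - 1)⟫_𝕜 = -(Δt * ⟪G ψ, σ n⟫_𝕜)) ↔
    (∀ n : ℕ, 1 ≤ n → ∀ ψ : V,
        ρ * ⟪ψ, v n - v (n - 1)⟫_𝕜 = -(Δt * k * ⟪G ψ, G (q n)⟫_𝕜)) := by
  subst hc
  have hooke (n : ℕ) (ξ : W) : ⟪ξ, σ n⟫_𝕜 = k * ⟪ξ, G (q n)⟫_𝕜 :=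
    dual_stress_eq_mul_dual_strain G (innerₛₗ 𝕜 ξ) hk hq (hσupd · ξ) (hσ0 ξ) n
  simp only [hooke, mul_assoc]

end Equivalence

theorem stmt1 {V W : Type*} [NormedAddCommGroup V] [InnerProductSpace ℝ V]
    [NormedAddCommGroup W] [InnerProductSpace ℝ W]
    (G : V →ₗ[ℝ] W) (ρ k Δt c : ℝ) (hρ : 0 < ρ) (hk : 0 < k) (hΔt : 0 < Δt)
    (hc : c = k⁻¹)
    (q v : ℕ → V) (σ : ℕ → W)
    (hq : ∀ n : ℕ, q (n + 1) = q n + Δt • v n)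
    (hσupd : ∀ n : ℕ, ∀ ξ : W, c * ⟪ξ, σ (n + 1) - σ n⟫ = Δt * ⟪ξ, G (v n)⟫)
    (hσ0 : σ 0 = k • G (q 0)) :
    (∀ n : ℕ, 1 ≤ n → ∀ ψ : V,
        ρ * ⟪ψ, v n - v (n - 1)⟫ = -(Δt * ⟪G ψ, σ n⟫)) ↔
    (∀ n : ℕ, 1 ≤ n → ∀ ψ : V,
        ρ * ⟪ψ, v n - v (n - 1)⟫ = -(Δt * k * ⟪G ψ, G (q n)⟫)) :=
  stmt1_general G ρ k Δt c hk.ne' hc q v σ hq hσupd fun ξ ↦ by rw [hσ0, real_inner_smul_right]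
end

section
/- Let V and W be real inner product spaces, G : V →ₗ[ℝ] W a linear map, ρ > 0, k > 0, Δt > 0 real constants. Let q, v, a : ℕ → V satisfy, for all n ∈ ℕ: (i) the weak equation of motion ρ⟪ψ, a(n)⟫ = −k⟪G ψ, G(q n)⟫ for all ψ ∈ V; (ii) the Newmark velocity update with γ = 1/2: v(n+1) = v(n) + (Δt/2) • (a(n+1) + a(n)); (iii) the Newmark displacement update with β = 0: q(n+1) = q(n) + Δt • v(n) + (Δt²/2) • a(n). Then for all n ≥ 1 and all ψ ∈ V, ρ⟪ψ, q(n+1) − 2•q(n) + q(n−1)⟫ = −Δt²·k⟪G ψ, G(q n)⟫. -/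
open scoped RealInnerProductSpace

/-- The Newmark time-stepping relations with parameters `γ`, `β` and time step `Δt`, for sequences
of displacements `q`, velocities `v` and accelerations `a`. No equation of motion is included. -/
structure IsNewmark {K V : Type*} [Field K] [AddCommGroup V] [Module K V]
    (γ β Δt : K) (q v a : ℕ → V) : Prop where
  velocity_succ (n : ℕ) : v (n + 1) = v n + Δt • ((1 - γ) • a n + γ • a (n + 1))
  displacement_succ (n : ℕ) :
    q (n + 1) = q n + Δt • v n + Δt ^ 2 • ((1 / 2 - β) • a n + β • a (n + 1))

section Newmark

variable {K V : Type*} [Field K] [NeZero (2 : K)] [AddCommGroup V] [Module K V]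
  {γ β Δt : K} {q v a : ℕ → V}

theorem isNewmark_half_zero_iff :
    IsNewmark (1 / 2) 0 Δt q v a ↔
      (∀ n, v (n + 1) = v n + (Δt / 2) • (a (n + 1) + a n)) ∧
        ∀ n, q (n + 1) = q n + Δt • v n + (Δt ^ 2 / 2) • a n := by
  have velocity_increment (n : ℕ) :
      Δt • ((1 - 1 / 2 : K) • a n + (1 / 2 : K) • a (n + 1)) =
        (Δt / 2) • (a (n + 1) + a n) := by
    rw [sub_half]
    module
  have displacement_increment (n : ℕ) :
      Δt ^ 2 • ((1 / 2 - 0 : K) • a n + (0 : K) • a (n + 1)) = (Δt ^ 2 / 2) • a n := by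
    module
  exact ⟨fun h ↦ ⟨by simpa only [velocity_increment] using h.velocity_succ,
      by simpa only [displacement_increment] using h.displacement_succ⟩,
    fun ⟨hv, hq⟩ ↦ ⟨by simpa only [velocity_increment] using hv,
      by simpa only [displacement_increment] using hq⟩⟩

theorem IsNewmark.second_difference (h : IsNewmark γ β Δt q v a) (n : ℕ) :
    q (n + 2) - (2 : K) • q (n + 1) + q n =
      Δt ^ 2 • (β • a (n + 2) + (1 / 2 + γ - 2 * β) • a (n + 1) + (1 / 2 - γ + β) • a n) := by
  calc
    _ = Δt • (v (n + 1) - v n) + Δt ^ 2 •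
          (((1 / 2 - β) • a (n + 1) + β • a (n + 2)) - ((1 / 2 - β) • a n + β • a (n + 1))) := by
      rw [h.displacement_succ (n + 1), h.displacement_succ n]
      module
    _ = _ := by
      rw [h.velocity_succ n]
      match_scalars <;> field_simp <;> ring

/-- In a weak formulation, `L` and `f` are the inertia and internal force terms for one fixed test
function. -/
theorem stmt2_general {M : Type*} [AddCommGroup M] [Module K M] (L : V →ₗ[K] M) (f : V → M)
    (heom : ∀ n, L (a n) = -f (q n)) (h : IsNewmark γ β Δt q v a) (n : ℕ) :
    L (q (n + 2) - (2 : K) • q (n + 1) + q n) =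
      -(Δt ^ 2 • (β • f (q (n + 2)) + (1 / 2 + γ - 2 * β) • f (q (n + 1)) +
        (1 / 2 - γ + β) • f (q n))) := by
  rw [h.second_difference]
  simp only [map_smul, map_add, heom]
  module

end Newmark

theorem stmt2 {V W : Type*} [NormedAddCommGroup V] [InnerProductSpace ℝ V]
    [NormedAddCommGroup W] [InnerProductSpace ℝ W]
    (G : V →ₗ[ℝ] W) (ρ k Δt : ℝ) (hρ : 0 < ρ) (hk : 0 < k) (hΔt : 0 < Δt)
    (q v a : ℕ → V)
    (heom : ∀ n : ℕ, ∀ ψ : V, ρ * ⟪ψ, a n⟫ = -(k * ⟪G ψ, G (q n)⟫))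
    (hv : ∀ n : ℕ, v (n + 1) = v n + (Δt / 2) • (a (n + 1) + a n))
    (hq : ∀ n : ℕ, q (n + 1) = q n + Δt • v n + (Δt ^ 2 / 2) • a n) :
    ∀ n : ℕ, 1 ≤ n → ∀ ψ : V,
      ρ * ⟪ψ, q (n + 1) - (2 : ℝ) • q n + q (n - 1)⟫ =
        -(Δt ^ 2 * k * ⟪G ψ, G (q n)⟫) := by
  rintro (_ | n) hn ψ
  · omega
  · simpa [mul_assoc, add_halves, -one_div] using
      stmt2_general (ρ • innerₗ V ψ) (fun u ↦ k * ⟪G ψ, G u⟫) (heom · ψ)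
        (isNewmark_half_zero_iff.mpr ⟨hv, hq⟩) n
end

section
/- Let V and W be real inner product spaces, G : V →ₗ[ℝ] W a linear map, ρ > 0, k > 0, Δt > 0 real constants. Let q, v, a : ℕ → V satisfy, for all n ∈ ℕ: (i) the weak equation of motion ρ⟪ψ, a(n)⟫ = −k⟪G ψ, G(q n)⟫ for all ψ ∈ V; (ii) the Newmark velocity update with γ = 1/2: v(n+1) = v(n) + (Δt/2) • (a(n+1) + a(n)); (iii) the Newmark displacement update with β = 1/4: q(n+1) = q(n) + Δt • v(n) + Δt² • ((1/4) • a(n+1) + (1/4) • a(n)). Then for all n ∈ ℕ: q(n+1) − q(n) = (Δt/2) • (v(n) + v(n+1)), and for all ψ ∈ V, ρ⟪ψ, v(n+1) − v(n)⟫ = −Δt·k⟪G ψ, G((1/2) • (q(n) + q(n+1)))⟫. -/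
open scoped RealInnerProductSpace

section TimeStepping

variable {𝕜 V E : Type*} [Field 𝕜] [AddCommGroup V] [Module 𝕜 V] [AddCommGroup E] [Module 𝕜 E]

/-- One step, of length `h`, of the Newmark scheme with parameters `β` and `γ`, from displacement,
velocity and acceleration `q`, `v`, `a` to `q'`, `v'`, `a'`. Only the two kinematic updates are
recorded; the equation of motion is a separate condition on `q`, `a` and on `q'`, `a'`. -/
structure IsNewmarkStep (β γ h : 𝕜) (q v a q' v' a' : V) : Prop where
  velocity : v' = v + h • ((1 - γ) • a + γ • a')
  displacement : q' = q + h • v + h ^ 2 • ((1 / 2 - β) • a + β • a')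

/-- One step, of length `h`, of the implicit midpoint rule for `q̇ = v`, `M v̇ = -K q`. The mass
operator `M` and the stiffness operator `K` take values in a space `E` of their own, so that the
weak form of the equation is covered by letting `E` be the dual of `V`. -/
structure IsImplicitMidpointStep (M K : V →ₗ[𝕜] E) (h : 𝕜) (q v q' v' : V) : Prop where
  displacement : q' - q = (h / 2) • (v + v')
  momentum : M (v' - v) = -(h • K ((1 / 2 : 𝕜) • (q + q')))

variable {β γ h : 𝕜} {q v a q' v' a' : V} {M K : V →ₗ[𝕜] E}

namespace IsNewmarkStep

theorem velocity_sub (step : IsNewmarkStep β γ h q v a q' v' a') :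
    v' - v = h • ((1 - γ) • a + γ • a') :=
  sub_eq_of_eq_add' step.velocity

theorem displacement_sub [NeZero (2 : 𝕜)] (step : IsNewmarkStep β γ h q v a q' v' a')
    (hβγ : 2 * β = γ) : q' - q = (h / 2) • (v + v') := by
  have two_ne : (2 : 𝕜) ≠ 0 := two_ne_zero
  -- For `2 * β = γ` the acceleration averages in the two updates are proportional, so the
  -- acceleration can be eliminated in favour of the velocity increment.
  have acceleration_eq : h ^ 2 • ((1 / 2 - β) • a + β • a') = (h / 2) • (v' - v) := by
    rw [step.velocity_sub, ← hβγ]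
    match_scalars <;> field_simp
  calc
    q' - q = h • v + h ^ 2 • ((1 / 2 - β) • a + β • a') := by
      rw [step.displacement]
      abel
    _ = h • v + (h / 2) • (v' - v) := by rw [acceleration_eq]
    _ = (h / 2) • (v + v') := by
      match_scalars <;> field_simp
      ring

theorem map_velocity_sub (step : IsNewmarkStep β γ h q v a q' v' a')
    (motion : M a = -K q) (motion' : M a' = -K q') :
    M (v' - v) = -(h • K ((1 - γ) • q + γ • q')) := by
  rw [step.velocity_sub]
  simp only [map_add, map_smul, motion, motion']
  module

end IsNewmarkStep

theorem two_mul_one_div_four [NeZero (2 : 𝕜)] : 2 * (1 / 4 : 𝕜) = 1 / 2 := by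
  have two_ne : (2 : 𝕜) ≠ 0 := two_ne_zero
  rw [show (4 : 𝕜) = 2 * 2 by norm_num]
  field_simp

theorem isNewmarkStep_quarter_half_iff [NeZero (2 : 𝕜)] :
    IsNewmarkStep (1 / 4) (1 / 2) h q v a q' v' a' ↔
      v' = v + (h / 2) • (a' + a) ∧
        q' = q + h • v + h ^ 2 • ((1 / 4 : 𝕜) • a' + (1 / 4 : 𝕜) • a) := by
  have half_sub_quarter : (1 / 2 : 𝕜) - 1 / 4 = 1 / 4 := by
    rw [← two_mul_one_div_four, two_mul, add_sub_cancel_right]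
  have velocity_eq : h • ((1 - 1 / 2 : 𝕜) • a + (1 / 2 : 𝕜) • a') = (h / 2) • (a' + a) := by
    rw [sub_half]
    module
  have acceleration_eq : (1 / 2 - 1 / 4 : 𝕜) • a + (1 / 4 : 𝕜) • a' =
      (1 / 4 : 𝕜) • a' + (1 / 4 : 𝕜) • a := by
    rw [half_sub_quarter, add_comm]
  constructor
  · intro step
    exact ⟨velocity_eq ▸ step.velocity, acceleration_eq ▸ step.displacement⟩
  · rintro ⟨velocity, displacement⟩
    exact ⟨velocity_eq ▸ velocity, acceleration_eq ▸ displacement⟩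

theorem stmt3_general [NeZero (2 : 𝕜)]
    (step : IsNewmarkStep (1 / 4) (1 / 2) h q v a q' v' a')
    (motion : M a = -K q) (motion' : M a' = -K q') :
    IsImplicitMidpointStep M K h q v q' v' where
  displacement := step.displacement_sub two_mul_one_div_four
  momentum := by rw [step.map_velocity_sub motion motion', sub_half, smul_add]

end TimeStepping

section WeakForm

variable {V W : Type*} [SeminormedAddCommGroup V] [InnerProductSpace ℝ V]
  [SeminormedAddCommGroup W] [InnerProductSpace ℝ W]

/-- The weak mass operator with density `ρ`, sending `x` to the functional `ψ ↦ ρ ⟪ψ, x⟫`. -/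
noncomputable def massOperator (V : Type*) [SeminormedAddCommGroup V] [InnerProductSpace ℝ V]
    (ρ : ℝ) : V →ₗ[ℝ] Module.Dual ℝ V :=
  ρ • (innerₗ V).flip

/-- The weak stiffness operator of the discrete gradient `G` with stiffness constant `k`, sending
`x` to the functional `ψ ↦ k ⟪G ψ, G x⟫`. -/
noncomputable def stiffnessOperator (G : V →ₗ[ℝ] W) (k : ℝ) : V →ₗ[ℝ] Module.Dual ℝ V :=
  k • ((innerₗ W).compl₁₂ G G).flip

theorem massOperator_apply (ρ : ℝ) (x ψ : V) : massOperator V ρ x ψ = ρ * ⟪ψ, x⟫ := rfl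

theorem stiffnessOperator_apply (G : V →ₗ[ℝ] W) (k : ℝ) (x ψ : V) :
    stiffnessOperator G k x ψ = k * ⟪G ψ, G x⟫ := rfl

theorem massOperator_eq_neg_stiffnessOperator_iff {G : V →ₗ[ℝ] W} {ρ k : ℝ} {a q : V} :
    massOperator V ρ a = -stiffnessOperator G k q ↔
      ∀ ψ : V, ρ * ⟪ψ, a⟫ = -(k * ⟪G ψ, G q⟫) := by
  simp only [LinearMap.ext_iff, LinearMap.neg_apply, massOperator_apply, stiffnessOperator_apply]

theorem isImplicitMidpointStep_massOperator_stiffnessOperator_iff {G : V →ₗ[ℝ] W} {ρ k h : ℝ}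
    {q v q' v' : V} :
    IsImplicitMidpointStep (massOperator V ρ) (stiffnessOperator G k) h q v q' v' ↔
      q' - q = (h / 2) • (v + v') ∧
        ∀ ψ : V, ρ * ⟪ψ, v' - v⟫ = -(h * k * ⟪G ψ, G ((1 / 2 : ℝ) • (q + q'))⟫) := by
  have momentum_iff : massOperator V ρ (v' - v) =
        -(h • stiffnessOperator G k ((1 / 2 : ℝ) • (q + q'))) ↔
      ∀ ψ : V, ρ * ⟪ψ, v' - v⟫ = -(h * k * ⟪G ψ, G ((1 / 2 : ℝ) • (q + q'))⟫) := by
    simp only [LinearMap.ext_iff, LinearMap.neg_apply, LinearMap.smul_apply, massOperator_apply,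
      stiffnessOperator_apply, smul_eq_mul, mul_assoc]
  constructor
  · intro step
    exact ⟨step.displacement, momentum_iff.mp step.momentum⟩
  · rintro ⟨displacement, momentum⟩
    exact ⟨displacement, momentum_iff.mpr momentum⟩

end WeakForm

theorem stmt3 {V W : Type*} [NormedAddCommGroup V] [InnerProductSpace ℝ V]
    [NormedAddCommGroup W] [InnerProductSpace ℝ W]
    (G : V →ₗ[ℝ] W) (ρ k Δt : ℝ) (hρ : 0 < ρ) (hk : 0 < k) (hΔt : 0 < Δt)
    (q v a : ℕ → V)
    (heom : ∀ n : ℕ, ∀ ψ : V, ρ * ⟪ψ, a n⟫ = -(k * ⟪G ψ, G (q n)⟫))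
    (hv : ∀ n : ℕ, v (n + 1) = v n + (Δt / 2) • (a (n + 1) + a n))
    (hq : ∀ n : ℕ, q (n + 1) = q n + Δt • v n +
      (Δt ^ 2) • ((1 / 4 : ℝ) • a (n + 1) + (1 / 4 : ℝ) • a n)) :
    ∀ n : ℕ,
      (q (n + 1) - q n = (Δt / 2) • (v n + v (n + 1))) ∧
      (∀ ψ : V, ρ * ⟪ψ, v (n + 1) - v n⟫ =
        -(Δt * k * ⟪G ψ, G ((1 / 2 : ℝ) • (q n + q (n + 1)))⟫)) :=
  fun n => isImplicitMidpointStep_massOperator_stiffnessOperator_iff.mp <| stmt3_general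
    (isNewmarkStep_quarter_half_iff.mpr ⟨hv n, hq n⟩)
    (massOperator_eq_neg_stiffnessOperator_iff.mpr (heom n))
    (massOperator_eq_neg_stiffnessOperator_iff.mpr (heom (n + 1)))
end

section
/- Let V and W be real inner product spaces, G : V →ₗ[ℝ] W a linear map, ρ > 0, k > 0, Δt > 0 real constants and c = k⁻¹. Let v : ℕ → V and σ : ℕ → W satisfy the mixed leapfrog scheme: for all n ≥ 1 and all ψ ∈ V, ρ⟪ψ, v(n) − v(n−1)⟫ = −Δt⟪G ψ, σ(n)⟫, and for all n ∈ ℕ and all ξ ∈ W, c⟪ξ, σ(n+1) − σ(n)⟫ = Δt⟪ξ, G(v n)⟫. Then for all n ≥ 1 and all ψ ∈ V, ρ⟪ψ, v(n+1) − 2•v(n) + v(n−1)⟫ = −Δt²·k⟪G ψ, G(v n)⟫. -/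
open scoped RealInnerProductSpace

/-!
Subtracting the momentum equations at two consecutive times leaves the stress increment
`σ (n + 1) - σ n` paired with `G ψ`. The stress equation tested with `ξ = G ψ` expresses this
pairing through `G (v n)`, which eliminates the stress.
-/

section SecondDifference

variable {R V W : Type*} [Ring R] [AddCommGroup V] [Module R V] [AddCommGroup W] [Module R W]

theorem sub_two_smul_add_eq_sub_sub_sub (x y z : V) :
    z - (2 : R) • y + x = (z - y) - (y - x) := by
  rw [two_smul]
  abel

theorem mul_map_second_difference_eq_neg_mul_map_sub (f : V →ₗ[R] R) (g : W →ₗ[R] R) {ρ τ : R}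
    {x y z : V} {s t : W} (hs : ρ * f (y - x) = -(τ * g s)) (ht : ρ * f (z - y) = -(τ * g t)) :
    ρ * f (z - (2 : R) • y + x) = -(τ * g (t - s)) :=
  calc ρ * f (z - (2 : R) • y + x)
    _ = ρ * f (z - y) - ρ * f (y - x) := by
      rw [sub_two_smul_add_eq_sub_sub_sub, map_sub f, mul_sub]
    _ = -(τ * g t) - -(τ * g s) := by rw [hs, ht]
    _ = -(τ * g (t - s)) := by rw [← neg_sub', ← mul_sub, map_sub g]

end SecondDifference

theorem stmt4_general {𝕜 V W : Type*} [RCLike 𝕜] [SeminormedAddCommGroup V]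
    [InnerProductSpace 𝕜 V] [SeminormedAddCommGroup W] [InnerProductSpace 𝕜 W]
    (G : V → W) (ρ k Δt c : 𝕜) (hk : k ≠ 0) (hc : c = k⁻¹) (v : ℕ → V) (σ : ℕ → W)
    (hdyn : ∀ n : ℕ, 1 ≤ n → ∀ ψ : V,
      ρ * inner 𝕜 ψ (v n - v (n - 1)) = -(Δt * inner 𝕜 (G ψ) (σ n)))
    (hσupd : ∀ n : ℕ, ∀ ξ : W,
      c * inner 𝕜 ξ (σ (n + 1) - σ n) = Δt * inner 𝕜 ξ (G (v n))) :
    ∀ n : ℕ, 1 ≤ n → ∀ ψ : V,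
      ρ * inner 𝕜 ψ (v (n + 1) - (2 : 𝕜) • v n + v (n - 1)) =
        -(Δt ^ 2 * k * inner 𝕜 (G ψ) (G (v n))) := by
  subst hc
  intro n hn ψ
  have hstress : inner 𝕜 (G ψ) (σ (n + 1) - σ n) = k * (Δt * inner 𝕜 (G ψ) (G (v n))) :=
    (inv_mul_eq_iff_eq_mul₀ hk).mp (hσupd n (G ψ))
  calc ρ * inner 𝕜 ψ (v (n + 1) - (2 : 𝕜) • v n + v (n - 1))
    _ = -(Δt * inner 𝕜 (G ψ) (σ (n + 1) - σ n)) :=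
      mul_map_second_difference_eq_neg_mul_map_sub (innerₛₗ 𝕜 ψ) (innerₛₗ 𝕜 (G ψ))
        (hdyn n hn ψ) (hdyn (n + 1) n.succ_pos ψ)
    _ = -(Δt ^ 2 * k * inner 𝕜 (G ψ) (G (v n))) := by
      rw [hstress]
      ring

theorem stmt4 {V W : Type*} [NormedAddCommGroup V] [InnerProductSpace ℝ V]
    [NormedAddCommGroup W] [InnerProductSpace ℝ W]
    (G : V →ₗ[ℝ] W) (ρ k Δt c : ℝ) (hρ : 0 < ρ) (hk : 0 < k) (hΔt : 0 < Δt)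
    (hc : c = k⁻¹)
    (v : ℕ → V) (σ : ℕ → W)
    (hdyn : ∀ n : ℕ, 1 ≤ n → ∀ ψ : V,
      ρ * ⟪ψ, v n - v (n - 1)⟫ = -(Δt * ⟪G ψ, σ n⟫))
    (hσupd : ∀ n : ℕ, ∀ ξ : W, c * ⟪ξ, σ (n + 1) - σ n⟫ = Δt * ⟪ξ, G (v n)⟫) :
    ∀ n : ℕ, 1 ≤ n → ∀ ψ : V,
      ρ * ⟪ψ, v (n + 1) - (2 : ℝ) • v n + v (n - 1)⟫ =
        -(Δt ^ 2 * k * ⟪G ψ, G (v n)⟫) :=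
  stmt4_general G ρ k Δt c hk.ne' hc v σ hdyn hσupd
end

section
/- Let W and V be real inner product spaces, D : W →ₗ[ℝ] V a linear map, ρ > 0, k > 0, Δt > 0 real constants, c = k⁻¹ and ν = ρ⁻¹. Let v : ℕ → V and σ : ℕ → W satisfy the dual mixed leapfrog scheme: for all n ≥ 1 and all ψ ∈ V, ρ⟪ψ, v(n) − v(n−1)⟫ = Δt⟪ψ, D(σ n)⟫, and for all n ∈ ℕ and all ξ ∈ W, c⟪ξ, σ(n+1) − σ(n)⟫ = −Δt⟪D ξ, v(n)⟫. Then for all n ≥ 1 and all ξ ∈ W, c⟪ξ, σ(n+1) − 2•σ(n) + σ(n−1)⟫ = −Δt²·ν⟪D ξ, D(σ n)⟫. -/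
open scoped RealInnerProductSpace

section

open scoped InnerProductSpace

variable {𝕜 W V : Type*} [RCLike 𝕜] [SeminormedAddCommGroup W] [InnerProductSpace 𝕜 W]
  [SeminormedAddCommGroup V] [InnerProductSpace 𝕜 V]
  {D : W → V} {ρ c Δt : 𝕜} {v : ℕ → V} {σ : ℕ → W}

/-- The staggered time discretization, with step `Δt`, of the mixed velocity–stress form
`ρ v' = D σ`, `c σ' = -D* v` of the wave equation: both equations are imposed weakly, and
`D*` is expressed by applying `D` to the test function. The stress `σ n` lives at time `n Δt`,
the velocity `v n` at time `(n + 1/2) Δt`. -/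
structure DualMixedLeapfrog (D : W → V) (ρ c Δt : 𝕜) (v : ℕ → V) (σ : ℕ → W) : Prop where
  velocity_update (n : ℕ) (ψ : V) :
    ρ * ⟪ψ, v (n + 1) - v n⟫_𝕜 = Δt * ⟪ψ, D (σ (n + 1))⟫_𝕜
  stress_update (n : ℕ) (ξ : W) :
    c * ⟪ξ, σ (n + 1) - σ n⟫_𝕜 = -(Δt * ⟪D ξ, v n⟫_𝕜)

namespace DualMixedLeapfrog

theorem inner_velocity_increment (h : DualMixedLeapfrog D ρ c Δt v σ) (hρ : ρ ≠ 0)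
    (n : ℕ) (ψ : V) :
    ⟪ψ, v (n + 1) - v n⟫_𝕜 = ρ⁻¹ * (Δt * ⟪ψ, D (σ (n + 1))⟫_𝕜) :=
  (eq_inv_mul_iff_mul_eq₀ hρ).mpr (h.velocity_update n ψ)

theorem mul_inner_stress_second_difference (h : DualMixedLeapfrog D ρ c Δt v σ)
    (n : ℕ) (ξ : W) :
    c * ⟪ξ, σ (n + 2) - (2 : 𝕜) • σ (n + 1) + σ n⟫_𝕜 =
      -(Δt * ⟪D ξ, v (n + 1) - v n⟫_𝕜) := by
  have second_difference : σ (n + 2) - (2 : 𝕜) • σ (n + 1) + σ n =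
      (σ (n + 2) - σ (n + 1)) - (σ (n + 1) - σ n) := by module
  calc c * ⟪ξ, σ (n + 2) - (2 : 𝕜) • σ (n + 1) + σ n⟫_𝕜
      = c * ⟪ξ, σ (n + 2) - σ (n + 1)⟫_𝕜 - c * ⟪ξ, σ (n + 1) - σ n⟫_𝕜 := by
        rw [second_difference, inner_sub_right, mul_sub]
    _ = -(Δt * ⟪D ξ, v (n + 1)⟫_𝕜) - -(Δt * ⟪D ξ, v n⟫_𝕜) := by
        rw [h.stress_update (n + 1) ξ, h.stress_update n ξ]
    _ = -(Δt * ⟪D ξ, v (n + 1) - v n⟫_𝕜) := by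
        rw [inner_sub_right]
        ring

end DualMixedLeapfrog

theorem stmt5_general (h : DualMixedLeapfrog D ρ c Δt v σ) (hρ : ρ ≠ 0) (n : ℕ) (ξ : W) :
    c * ⟪ξ, σ (n + 2) - (2 : 𝕜) • σ (n + 1) + σ n⟫_𝕜 =
      -(Δt ^ 2 * ρ⁻¹ * ⟪D ξ, D (σ (n + 1))⟫_𝕜) := by
  rw [h.mul_inner_stress_second_difference, h.inner_velocity_increment hρ]
  ring

end

theorem stmt5 {W V : Type*} [NormedAddCommGroup W] [InnerProductSpace ℝ W]
    [NormedAddCommGroup V] [InnerProductSpace ℝ V]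
    (D : W →ₗ[ℝ] V) (ρ k Δt c ν : ℝ) (hρ : 0 < ρ) (hk : 0 < k) (hΔt : 0 < Δt)
    (hc : c = k⁻¹) (hν : ν = ρ⁻¹)
    (v : ℕ → V) (σ : ℕ → W)
    (hdyn : ∀ n : ℕ, 1 ≤ n → ∀ ψ : V,
      ρ * ⟪ψ, v n - v (n - 1)⟫ = Δt * ⟪ψ, D (σ n)⟫)
    (hσupd : ∀ n : ℕ, ∀ ξ : W, c * ⟪ξ, σ (n + 1) - σ n⟫ = -(Δt * ⟪D ξ, v n⟫)) :
    ∀ n : ℕ, 1 ≤ n → ∀ ξ : W,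
      c * ⟪ξ, σ (n + 1) - (2 : ℝ) • σ n + σ (n - 1)⟫ =
        -(Δt ^ 2 * ν * ⟪D ξ, D (σ n)⟫) := by
  subst hν
  exact fun | n + 1, _, ξ => stmt5_general ⟨fun m ↦ hdyn (m + 1) m.succ_pos, hσupd⟩ hρ.ne' n ξ
end

section
/- Let W and V be real inner product spaces, D : W →ₗ[ℝ] V a linear map, k > 0, Δt > 0 real constants and c = k⁻¹. Let v, q : ℕ → V and σ : ℕ → W satisfy the reconstruction q(n+1) = q(n) + Δt • v(n) for all n ∈ ℕ, together with the initial constraint: for all ξ ∈ W, c⟪ξ, σ 0⟫ = −⟪D ξ, q 0⟫. Then the following are equivalent: (a) for all n ∈ ℕ and all ξ ∈ W, c⟪ξ, σ(n+1)⟫ = −⟪D ξ, q(n+1)⟫; (b) for all n ∈ ℕ and all ξ ∈ W, c⟪ξ, σ(n+1) − σ(n)⟫ = −Δt⟪D ξ, v(n)⟫. -/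
open scoped RealInnerProductSpace

/-!
The stress–displacement constraint is linear in the pair `(σ, q)`. Substituting the reconstruction
of `q`, the velocity–stress update says precisely that the residual of this constraint is the same
at consecutive time steps; as it vanishes initially, being conserved is the same as vanishing.
-/

theorem forall_apply_succ_eq_apply_zero_iff {α : Type*} {r : ℕ → α} :
    (∀ n, r (n + 1) = r 0) ↔ ∀ n, r (n + 1) = r n := by
  refine ⟨fun h n ↦ ?_, fun h n ↦ ?_⟩
  · cases n with
    | zero => exact h 0
    | succ m => rw [h (m + 1), h m]
  · induction n with
    | zero => exact h 0
    | succ m ih => rw [h (m + 1), ih]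

section ConstraintResidual

open scoped InnerProductSpace

variable {𝕜 W V : Type*} [RCLike 𝕜] [SeminormedAddCommGroup W] [InnerProductSpace 𝕜 W]
  [SeminormedAddCommGroup V] [InnerProductSpace 𝕜 V]

/-- The residual of the weak constraint `c ⟪ξ, s⟫ = -⟪D ξ, u⟫` linking a stress `s` to a
displacement `u`, as a function of the test stress `ξ`. -/
def constraintResidual (D : W → V) (c : 𝕜) (s : W) (u : V) (ξ : W) : 𝕜 :=
  c * ⟪ξ, s⟫_𝕜 + ⟪D ξ, u⟫_𝕜

theorem constraintResidual_eq_zero_iff {D : W → V} {c : 𝕜} {s : W} {u : V} :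
    constraintResidual D c s u = 0 ↔ ∀ ξ, c * ⟪ξ, s⟫_𝕜 = -⟪D ξ, u⟫_𝕜 := by
  simp only [funext_iff, constraintResidual, Pi.zero_apply, add_eq_zero_iff_eq_neg]

theorem constraintResidual_sub (D : W → V) (c : 𝕜) (s s' : W) (u u' : V) :
    constraintResidual D c (s - s') (u - u') =
      constraintResidual D c s u - constraintResidual D c s' u' := by
  ext ξ
  simp only [constraintResidual, Pi.sub_apply, inner_sub_right]
  ring

theorem constraintResidual_add_smul_eq_iff {D : W → V} {c τ : 𝕜} {s s' : W} {u v : V} :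
    constraintResidual D c s' (u + τ • v) = constraintResidual D c s u ↔
      ∀ ξ, c * ⟪ξ, s' - s⟫_𝕜 = -(τ * ⟪D ξ, v⟫_𝕜) := by
  rw [← sub_eq_zero, ← constraintResidual_sub, add_sub_cancel_left, constraintResidual_eq_zero_iff]
  simp only [inner_smul_right]

theorem stmt6_general (D : W → V) (c : 𝕜) (Δt : ℕ → 𝕜) (v q : ℕ → V) (σ : ℕ → W)
    (hq : ∀ n, q (n + 1) = q n + Δt n • v n)
    (hinit : ∀ ξ, c * ⟪ξ, σ 0⟫_𝕜 = -⟪D ξ, q 0⟫_𝕜) :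
    (∀ n ξ, c * ⟪ξ, σ (n + 1)⟫_𝕜 = -⟪D ξ, q (n + 1)⟫_𝕜) ↔
      ∀ n ξ, c * ⟪ξ, σ (n + 1) - σ n⟫_𝕜 = -(Δt n * ⟪D ξ, v n⟫_𝕜) := by
  let r (n : ℕ) : W → 𝕜 := constraintResidual D c (σ n) (q n)
  have hr_zero : r 0 = 0 := constraintResidual_eq_zero_iff.2 hinit
  calc
    _ ↔ ∀ n, r (n + 1) = r 0 := by
      rw [hr_zero]
      exact forall_congr' fun n ↦ constraintResidual_eq_zero_iff.symm
    _ ↔ ∀ n, r (n + 1) = r n := forall_apply_succ_eq_apply_zero_iff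
    _ ↔ _ := forall_congr' fun n ↦ by
      simp only [r, hq n]
      exact constraintResidual_add_smul_eq_iff

end ConstraintResidual

theorem stmt6 {W V : Type*} [NormedAddCommGroup W] [InnerProductSpace ℝ W]
    [NormedAddCommGroup V] [InnerProductSpace ℝ V]
    (D : W →ₗ[ℝ] V) (k Δt c : ℝ) (hk : 0 < k) (hΔt : 0 < Δt) (hc : c = k⁻¹)
    (v q : ℕ → V) (σ : ℕ → W)
    (hq : ∀ n : ℕ, q (n + 1) = q n + Δt • v n)
    (hinit : ∀ ξ : W, c * ⟪ξ, σ 0⟫ = -⟪D ξ, q 0⟫) :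
    (∀ n : ℕ, ∀ ξ : W, c * ⟪ξ, σ (n + 1)⟫ = -⟪D ξ, q (n + 1)⟫) ↔
    (∀ n : ℕ, ∀ ξ : W, c * ⟪ξ, σ (n + 1) - σ n⟫ = -(Δt * ⟪D ξ, v n⟫)) :=
  stmt6_general D c (fun _ ↦ Δt) v q σ hq hinit
end

section
/- Let V and W be real inner product spaces, G : V →ₗ[ℝ] W a linear map, ρ > 0, k > 0, Δt > 0 real constants and c = k⁻¹. Let q, v : ℕ → V and σ : ℕ → W satisfy, for all n ∈ ℕ: the trapezoidal reconstruction q(n+1) = q(n) + (Δt/2) • (v(n) + v(n+1)); the weak implicit-midpoint stress update: for all ξ ∈ W, c⟪ξ, σ(n+1) − σ(n)⟫ = Δt⟪ξ, G((1/2) • (v(n) + v(n+1)))⟫; and the initial compatibility σ(0) = k • G(q 0). Then: (1) σ(n) = k • G(q n) for all n ∈ ℕ; and (2) the following are equivalent: (a) for all n ∈ ℕ and all ψ ∈ V, ρ⟪ψ, v(n+1) − v(n)⟫ = −Δt⟪G ψ, (1/2) • (σ(n) + σ(n+1))⟫; (b) for all n ∈ ℕ and all ψ ∈ V, ρ⟪ψ,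 v(n+1) − v(n)⟫ = −Δt·k⟪G ψ, G((1/2) • (q(n) + q(n+1)))⟫. -/
open scoped RealInnerProductSpace

/-!
The trapezoidal reconstruction advances `k • G q` by exactly the increment that the weak stress
update prescribes for `σ`, so the defect `σ - k • G q` is conserved. It vanishes initially, hence
always, and by linearity of `G` the midpoint stress is then `k • G` of the midpoint displacement.
-/

section Trapezoidal

variable {K V W : Type*} [Field K] [AddCommGroup V] [Module K V] [AddCommGroup W] [Module K W]

/-- The displacement `q` is the trapezoidal reconstruction of the velocity `v` with time step
`τ`. -/
def IsTrapezoidalReconstruction (τ : K) (q v : ℕ → V) : Prop :=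
  ∀ n, q (n + 1) = q n + (τ / 2) • (v n + v (n + 1))

theorem IsTrapezoidalReconstruction.smul_map_sub_smul_map {τ : K} {q v : ℕ → V}
    (hq : IsTrapezoidalReconstruction τ q v) (G : V →ₗ[K] W) (k : K) (n : ℕ) :
    k • G (q (n + 1)) - k • G (q n) = (k * τ) • G ((1 / 2 : K) • (v n + v (n + 1))) := by
  rw [← smul_sub, ← map_sub, hq n, add_sub_cancel_left, div_eq_mul_one_div, mul_smul, map_smul,
    mul_smul]

end Trapezoidal

section MidpointStress

open scoped InnerProductSpace

variable {𝕜 V W : Type*} [RCLike 𝕜] [NormedAddCommGroup W] [InnerProductSpace 𝕜 W]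

theorem eq_smul_of_forall_inv_mul_inner_eq {k a : 𝕜} (hk : k ≠ 0) {x y : W}
    (h : ∀ ξ : W, k⁻¹ * ⟪ξ, x⟫_𝕜 = a * ⟪ξ, y⟫_𝕜) : x = (k * a) • y := by
  refine ext_inner_left 𝕜 fun ξ => ?_
  rw [inner_smul_right, mul_assoc]
  exact (inv_mul_eq_iff_eq_mul₀ hk).mp (h ξ)

section Module

variable [AddCommGroup V] [Module 𝕜 V]

/-- The stress `σ` solves the implicit midpoint discretization, with time step `τ`, of the
constitutive law `c ∂ₜσ = G v`, tested against all of `W`; `c` is the compliance. -/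
def IsWeakMidpointStressUpdate (G : V →ₗ[𝕜] W) (c τ : 𝕜) (v : ℕ → V) (σ : ℕ → W) : Prop :=
  ∀ n, ∀ ξ : W,
    c * ⟪ξ, σ (n + 1) - σ n⟫_𝕜 = τ * ⟪ξ, G ((1 / 2 : 𝕜) • (v n + v (n + 1)))⟫_𝕜

namespace IsWeakMidpointStressUpdate

variable {G : V →ₗ[𝕜] W} {k τ : 𝕜} {q v : ℕ → V} {σ : ℕ → W}

theorem sub_eq_smul_map (hσ : IsWeakMidpointStressUpdate G k⁻¹ τ v σ) (hk : k ≠ 0) (n : ℕ) :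
    σ (n + 1) - σ n = (k * τ) • G ((1 / 2 : 𝕜) • (v n + v (n + 1))) :=
  eq_smul_of_forall_inv_mul_inner_eq hk (hσ n)

theorem sub_smul_map_eq_sub_smul_map_zero (hσ : IsWeakMidpointStressUpdate G k⁻¹ τ v σ)
    (hk : k ≠ 0) (hq : IsTrapezoidalReconstruction τ q v) (n : ℕ) :
    σ n - k • G (q n) = σ 0 - k • G (q 0) := by
  induction n with
  | zero => rfl
  | succ n ih =>
    have equal_increments : σ (n + 1) - σ n = k • G (q (n + 1)) - k • G (q n) :=
      (hσ.sub_eq_smul_map hk n).trans (hq.smul_map_sub_smul_map G k n).symm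
    rw [← ih, sub_eq_sub_iff_sub_eq_sub, equal_increments]

theorem eq_smul_map (hσ : IsWeakMidpointStressUpdate G k⁻¹ τ v σ) (hk : k ≠ 0)
    (hq : IsTrapezoidalReconstruction τ q v) (hσ0 : σ 0 = k • G (q 0)) (n : ℕ) :
    σ n = k • G (q n) := by
  rw [← sub_eq_zero, hσ.sub_smul_map_eq_sub_smul_map_zero hk hq, hσ0, sub_self]

end IsWeakMidpointStressUpdate

end Module

theorem stmt7_general [SeminormedAddCommGroup V] [InnerProductSpace 𝕜 V]
    (G : V →ₗ[𝕜] W) (ρ k τ c : 𝕜) (hk : k ≠ 0) (hc : c = k⁻¹) (q v : ℕ → V) (σ : ℕ → W)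
    (hq : IsTrapezoidalReconstruction τ q v) (hσ : IsWeakMidpointStressUpdate G c τ v σ)
    (hσ0 : σ 0 = k • G (q 0)) :
    (∀ n, σ n = k • G (q n)) ∧
    ((∀ n, ∀ ψ : V, ρ * ⟪ψ, v (n + 1) - v n⟫_𝕜 =
        -(τ * ⟪G ψ, (1 / 2 : 𝕜) • (σ n + σ (n + 1))⟫_𝕜)) ↔
     (∀ n, ∀ ψ : V, ρ * ⟪ψ, v (n + 1) - v n⟫_𝕜 =
        -(τ * k * ⟪G ψ, G ((1 / 2 : 𝕜) • (q n + q (n + 1)))⟫_𝕜))) := by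
  subst hc
  have stress_eq : ∀ n, σ n = k • G (q n) := hσ.eq_smul_map hk hq hσ0
  have midpoint_stress_eq (n : ℕ) :
      (1 / 2 : 𝕜) • (σ n + σ (n + 1)) = k • G ((1 / 2 : 𝕜) • (q n + q (n + 1))) := by
    rw [stress_eq n, stress_eq (n + 1), ← smul_add, smul_comm, ← map_add, ← map_smul]
  refine ⟨stress_eq, ?_⟩
  simp only [midpoint_stress_eq, inner_smul_right, mul_assoc]

end MidpointStress

theorem stmt7 {V W : Type*} [NormedAddCommGroup V] [InnerProductSpace ℝ V]
    [NormedAddCommGroup W] [InnerProductSpace ℝ W]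
    (G : V →ₗ[ℝ] W) (ρ k Δt c : ℝ) (hρ : 0 < ρ) (hk : 0 < k) (hΔt : 0 < Δt)
    (hc : c = k⁻¹)
    (q v : ℕ → V) (σ : ℕ → W)
    (hq : ∀ n : ℕ, q (n + 1) = q n + (Δt / 2) • (v n + v (n + 1)))
    (hσupd : ∀ n : ℕ, ∀ ξ : W,
      c * ⟪ξ, σ (n + 1) - σ n⟫ = Δt * ⟪ξ, G ((1 / 2 : ℝ) • (v n + v (n + 1)))⟫)
    (hσ0 : σ 0 = k • G (q 0)) :
    (∀ n : ℕ, σ n = k • G (q n)) ∧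
    ((∀ n : ℕ, ∀ ψ : V, ρ * ⟪ψ, v (n + 1) - v n⟫ =
        -(Δt * ⟪G ψ, (1 / 2 : ℝ) • (σ n + σ (n + 1))⟫)) ↔
     (∀ n : ℕ, ∀ ψ : V, ρ * ⟪ψ, v (n + 1) - v n⟫ =
        -(Δt * k * ⟪G ψ, G ((1 / 2 : ℝ) • (q n + q (n + 1)))⟫))) :=
  stmt7_general G ρ k Δt c hk.ne' hc q v σ hq hσupd hσ0
end

section
/- Let V and W be real inner product spaces, G : V →ₗ[ℝ] W a linear map, ρ > 0, k > 0 real constants and c = k⁻¹. Let v : ℝ → V be twice differentiable and σ : ℝ → W be differentiable, and suppose that for all t ∈ ℝ: (i) for all ψ ∈ V, ρ⟪ψ, v'(t)⟫ = −⟪G ψ, σ(t)⟫; and (ii) c • σ'(t) = G(v(t)). Then for all t ∈ ℝ and all ψ ∈ V, ρ⟪ψ, v''(t)⟫ = −k⟪G ψ, G(v(t))⟫. -/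
open scoped RealInnerProductSpace

open scoped Topology

section

variable {𝕜 V W : Type*} [RCLike 𝕜]
  [NormedAddCommGroup V] [InnerProductSpace 𝕜 V] [NormedSpace ℝ V]
  [NormedAddCommGroup W] [InnerProductSpace 𝕜 W] [NormedSpace ℝ W]

theorem hasDerivAt_const_inner (ψ : V) {u : ℝ → V} {u' : V} {t : ℝ} (hu : HasDerivAt u u' t) :
    HasDerivAt (fun s => inner 𝕜 ψ (u s)) (inner 𝕜 ψ u') t := by
  simpa only [inner_zero_left, add_zero] using (hasDerivAt_const t ψ).inner 𝕜 hu

theorem mul_inner_deriv_eq_neg_inner_deriv {ρ : 𝕜} {ψ : V} {w : W} {u : ℝ → V} {u' : V}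
    {σ : ℝ → W} {σ' : W} {t : ℝ} (hu : HasDerivAt u u' t) (hσ : HasDerivAt σ σ' t)
    (h : ∀ᶠ s in 𝓝 t, ρ * inner 𝕜 ψ (u s) = -inner 𝕜 w (σ s)) :
    ρ * inner 𝕜 ψ u' = -inner 𝕜 w σ' :=
  ((hasDerivAt_const_inner ψ hu).const_mul ρ).unique
    ((hasDerivAt_const_inner w hσ).neg.congr_of_eventuallyEq h)

theorem stmt11_general (G : V → W) {ρ k c : 𝕜} (hk : k ≠ 0) (hc : c = k⁻¹)
    {v v' : ℝ → V} {v'' : V} {σ : ℝ → W} {σ' : W} {t : ℝ} {ψ : V}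
    (_hv : ∀ᶠ s in 𝓝 t, HasDerivAt v (v' s) s) (hv' : HasDerivAt v' v'' t)
    (hσ : HasDerivAt σ σ' t)
    (hdyn : ∀ᶠ s in 𝓝 t, ρ * inner 𝕜 ψ (v' s) = -inner 𝕜 (G ψ) (σ s))
    (hconst : c • σ' = G (v t)) :
    ρ * inner 𝕜 ψ v'' = -(k * inner 𝕜 (G ψ) (G (v t))) := by
  have stress_rate : σ' = k • G (v t) := (inv_smul_eq_iff₀ hk).mp (hc ▸ hconst)
  calc
    ρ * inner 𝕜 ψ v'' = -inner 𝕜 (G ψ) σ' := mul_inner_deriv_eq_neg_inner_deriv hv' hσ hdyn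
    _ = -(k * inner 𝕜 (G ψ) (G (v t))) := by rw [stress_rate, inner_smul_right]

end

theorem stmt11 {V W : Type*} [NormedAddCommGroup V] [InnerProductSpace ℝ V]
    [NormedAddCommGroup W] [InnerProductSpace ℝ W]
    (G : V →ₗ[ℝ] W) (ρ k c : ℝ) (hρ : 0 < ρ) (hk : 0 < k) (hc : c = k⁻¹)
    (v : ℝ → V) (σ : ℝ → W)
    (hv : Differentiable ℝ v) (hv' : Differentiable ℝ (deriv v))
    (hσ : Differentiable ℝ σ)
    (hdyn : ∀ t : ℝ, ∀ ψ : V, ρ * ⟪ψ, deriv v t⟫ = -⟪G ψ, σ t⟫)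
    (hconst : ∀ t : ℝ, c • deriv σ t = G (v t)) :
    ∀ t : ℝ, ∀ ψ : V, ρ * ⟪ψ, deriv (deriv v) t⟫ = -(k * ⟪G ψ, G (v t)⟫) :=
  fun t ψ => stmt11_general G hk.ne' hc (.of_forall fun s => (hv s).hasDerivAt)
    (hv' t).hasDerivAt (hσ t).hasDerivAt (.of_forall fun s => hdyn s ψ) (hconst t)
end

section
/- Let W and V be real inner product spaces, D : W →ₗ[ℝ] V a linear map, ρ > 0, k > 0 real constants, c = k⁻¹ and ν = ρ⁻¹. Let σ : ℝ → W be twice differentiable and v : ℝ → V be differentiable, and suppose that for all t ∈ ℝ: (i) ρ • v'(t) = D(σ(t)); and (ii) for all ξ ∈ W, c⟪ξ, σ'(t)⟫ = −⟪D ξ, v(t)⟫. Then for all t ∈ ℝ and all ξ ∈ W, c⟪ξ, σ''(t)⟫ = −ν⟪D ξ, D(σ(t))⟫. -/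
open scoped RealInnerProductSpace

section WeakForm

variable {𝕜 W V : Type*} [RCLike 𝕜]
  [NormedAddCommGroup W] [InnerProductSpace 𝕜 W] [NormedSpace ℝ W]
  [NormedAddCommGroup V] [InnerProductSpace 𝕜 V] [NormedSpace ℝ V]

theorem hasDerivWithinAt_const_inner {s : Set ℝ} {t : ℝ} {f : ℝ → V} {f' : V}
    (x : V) (hf : HasDerivWithinAt f f' s t) :
    HasDerivWithinAt (fun r => inner 𝕜 x (f r)) (inner 𝕜 x f') s t := by
  simpa using (hasDerivWithinAt_const t s x).inner 𝕜 hf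

theorem mul_inner_eq_neg_inner_of_hasDerivWithinAt {s : Set ℝ} {t : ℝ}
    {f : ℝ → W} {f' : W} {g : ℝ → V} {g' : V} {c : 𝕜} {x : W} {y : V}
    (hs : UniqueDiffWithinAt ℝ s t) (ht : t ∈ s)
    (hf : HasDerivWithinAt f f' s t) (hg : HasDerivWithinAt g g' s t)
    (hfg : ∀ r ∈ s, c * inner 𝕜 x (f r) = -inner 𝕜 y (g r)) :
    c * inner 𝕜 x f' = -inner 𝕜 y g' := by
  have hleft : HasDerivWithinAt (fun r => c * inner 𝕜 x (f r)) (c * inner 𝕜 x f') s t :=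
    (hasDerivWithinAt_const_inner x hf).const_mul c
  have hright : HasDerivWithinAt (fun r => -inner 𝕜 y (g r)) (-inner 𝕜 y g') s t :=
    (hasDerivWithinAt_const_inner y hg).neg
  exact hs.eq_deriv s hleft (hright.congr hfg (hfg t ht))

theorem stmt12_general {J : Set ℝ} (hJ : UniqueDiffOn ℝ J) (D : W → V) {ρ : 𝕜} (c : 𝕜)
    (hρ : ρ ≠ 0) {σ σ' σ'' : ℝ → W} {v v' : ℝ → V}
    (hσ : ∀ t ∈ J, HasDerivWithinAt σ (σ' t) J t)
    (hσ' : ∀ t ∈ J, HasDerivWithinAt σ' (σ'' t) J t)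
    (hv : ∀ t ∈ J, HasDerivWithinAt v (v' t) J t)
    (hbal : ∀ t ∈ J, ρ • v' t = D (σ t))
    (hconst : ∀ t ∈ J, ∀ ξ : W, c * inner 𝕜 ξ (σ' t) = -inner 𝕜 (D ξ) (v t)) :
    ∀ t ∈ J, ∀ ξ : W, c * inner 𝕜 ξ (σ'' t) = -(ρ⁻¹ * inner 𝕜 (D ξ) (D (σ t))) := by
  intro t ht ξ
  have hacc : v' t = ρ⁻¹ • D (σ t) := (eq_inv_smul_iff₀ hρ).mpr (hbal t ht)
  calc c * inner 𝕜 ξ (σ'' t) = -inner 𝕜 (D ξ) (v' t) :=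
        mul_inner_eq_neg_inner_of_hasDerivWithinAt (hJ t ht) ht (hσ' t ht) (hv t ht)
          fun r hr => hconst r hr ξ
    _ = -(ρ⁻¹ * inner 𝕜 (D ξ) (D (σ t))) := by rw [hacc, inner_smul_right]

end WeakForm

theorem stmt12 {W V : Type*} [NormedAddCommGroup W] [InnerProductSpace ℝ W]
    [NormedAddCommGroup V] [InnerProductSpace ℝ V]
    (D : W →ₗ[ℝ] V) (ρ k c ν : ℝ) (hρ : 0 < ρ) (hk : 0 < k)
    (hc : c = k⁻¹) (hν : ν = ρ⁻¹)
    (σ : ℝ → W) (v : ℝ → V)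
    (hσ : Differentiable ℝ σ) (hσ' : Differentiable ℝ (deriv σ))
    (hv : Differentiable ℝ v)
    (hbal : ∀ t : ℝ, ρ • deriv v t = D (σ t))
    (hconst : ∀ t : ℝ, ∀ ξ : W, c * ⟪ξ, deriv σ t⟫ = -⟪D ξ, v t⟫) :
    ∀ t : ℝ, ∀ ξ : W, c * ⟪ξ, deriv (deriv σ) t⟫ = -(ν * ⟪D ξ, D (σ t)⟫) := by
  subst hν
  exact fun t => stmt12_general uniqueDiffOn_univ D c hρ.ne'
    (fun s _ => (hσ s).hasDerivAt.hasDerivWithinAt)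
    (fun s _ => (hσ' s).hasDerivAt.hasDerivWithinAt)
    (fun s _ => (hv s).hasDerivAt.hasDerivWithinAt)
    (fun s _ => hbal s) (fun s _ => hconst s) t (Set.mem_univ t)
end

section
/- Let V and W be real inner product spaces, C : V →ₗ[ℝ] W a linear map, ε > 0 and μ > 0 real constants. Let E : ℝ → V be twice differentiable and H : ℝ → W be differentiable, and suppose that for all t ∈ ℝ: (i) for all ψ ∈ V, ε⟪ψ, E'(t)⟫ = ⟪C ψ, H(t)⟫; and (ii) μ • H'(t) = −C(E(t)). Then for all t ∈ ℝ and all ψ ∈ V, ε⟪ψ, E''(t)⟫ = −μ⁻¹⟪C ψ, C(E(t))⟫. -/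
open scoped RealInnerProductSpace

open Filter Topology

section InnerDeriv

variable {𝕜 V : Type*} [RCLike 𝕜] [NormedAddCommGroup V] [InnerProductSpace 𝕜 V] [NormedSpace ℝ V]
  {f : ℝ → V} {f' : V} {t : ℝ}

lemma hasDerivAt_const_mul_inner (c : 𝕜) (x : V) (hf : HasDerivAt f f' t) :
    HasDerivAt (fun s => c * inner 𝕜 x (f s)) (c * inner 𝕜 x f') t := by
  simpa only [inner_zero_left, add_zero] using
    ((hasDerivAt_const t x).inner 𝕜 hf).const_mul c

lemma hasDerivAt_const_mul_inner_of_smul_eq {c : 𝕜} {y : V} (x : V) (hf : HasDerivAt f f' t)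
    (hy : c • f' = y) : HasDerivAt (fun s => c * inner 𝕜 x (f s)) (inner 𝕜 x y) t := by
  simpa only [← hy, inner_smul_right] using hasDerivAt_const_mul_inner c x hf

lemma deriv_deriv_const_mul_inner (c : 𝕜) (x : V) (hf : ∀ᶠ s in 𝓝 t, DifferentiableAt ℝ f s)
    (hf' : DifferentiableAt ℝ (deriv f) t) :
    deriv (deriv fun s => c * inner 𝕜 x (f s)) t = c * inner 𝕜 x (deriv (deriv f) t) := by
  have hderiv : (deriv fun s => c * inner 𝕜 x (f s)) =ᶠ[𝓝 t] fun s => c * inner 𝕜 x (deriv f s) :=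
    hf.mono fun s hs => (hasDerivAt_const_mul_inner c x hs.hasDerivAt).deriv
  rw [hderiv.deriv_eq, (hasDerivAt_const_mul_inner c x hf'.hasDerivAt).deriv]

end InnerDeriv

/-- Ampère's law is tested against `ψ` and Faraday's law against `C ψ`, so that differentiating the
former in time produces exactly the pairing that the latter evaluates. -/
theorem stmt15_general {𝕜 V W : Type*} [RCLike 𝕜]
    [SeminormedAddCommGroup V] [InnerProductSpace 𝕜 V]
    [SeminormedAddCommGroup W] [InnerProductSpace 𝕜 W]
    (C : V → W) {ε μ : 𝕜} (hμ : μ ≠ 0) {E : ℝ → V} {H : ℝ → W} {t : ℝ} {ψ : V}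
    (hampere : ∀ᶠ s in 𝓝 t, HasDerivAt (fun r => ε * inner 𝕜 ψ (E r)) (inner 𝕜 (C ψ) (H s)) s)
    (hfaraday : HasDerivAt (fun s => μ * inner 𝕜 (C ψ) (H s)) (inner 𝕜 (C ψ) (-C (E t))) t) :
    HasDerivAt (deriv fun s => ε * inner 𝕜 ψ (E s)) (-(μ⁻¹ * inner 𝕜 (C ψ) (C (E t)))) t := by
  have hampere_deriv : (deriv fun s => ε * inner 𝕜 ψ (E s)) =ᶠ[𝓝 t] fun s => inner 𝕜 (C ψ) (H s) :=
    hampere.mono fun _ hs => hs.deriv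
  have hcurl : HasDerivAt (fun s => inner 𝕜 (C ψ) (H s)) (-(μ⁻¹ * inner 𝕜 (C ψ) (C (E t)))) t := by
    simpa only [inv_mul_cancel_left₀ hμ, inner_neg_right, mul_neg] using hfaraday.const_mul μ⁻¹
  exact hcurl.congr_of_eventuallyEq hampere_deriv

theorem stmt15 {V W : Type*} [NormedAddCommGroup V] [InnerProductSpace ℝ V]
    [NormedAddCommGroup W] [InnerProductSpace ℝ W]
    (C : V →ₗ[ℝ] W) (ε μ : ℝ) (hε : 0 < ε) (hμ : 0 < μ)
    (E : ℝ → V) (H : ℝ → W)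
    (hE : Differentiable ℝ E) (hE' : Differentiable ℝ (deriv E))
    (hH : Differentiable ℝ H)
    (hdyn : ∀ t : ℝ, ∀ ψ : V, ε * ⟪ψ, deriv E t⟫ = ⟪C ψ, H t⟫)
    (hfaraday : ∀ t : ℝ, μ • deriv H t = -C (E t)) :
    ∀ t : ℝ, ∀ ψ : V,
      ε * ⟪ψ, deriv (deriv E) t⟫ = -(μ⁻¹ * ⟪C ψ, C (E t)⟫) := by
  intro t ψ
  rw [← deriv_deriv_const_mul_inner ε ψ (.of_forall hE) (hE' t)]
  exact (stmt15_general C hμ.ne'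
    (.of_forall fun s => hdyn s ψ ▸ hasDerivAt_const_mul_inner ε ψ (hE s).hasDerivAt)
    (hasDerivAt_const_mul_inner_of_smul_eq (C ψ) (hH t).hasDerivAt (hfaraday t))).deriv
end

section
/- Let W and V be real inner product spaces, C : W →ₗ[ℝ] V a linear map, ε > 0 and μ > 0 real constants. Let H : ℝ → W be twice differentiable and E : ℝ → V be differentiable, and suppose that for all t ∈ ℝ: (i) ε • E'(t) = C(H(t)); and (ii) for all ξ ∈ W, μ⟪ξ, H'(t)⟫ = −⟪C ξ, E(t)⟫. Then for all t ∈ ℝ and all ξ ∈ W, μ⟪ξ, H''(t)⟫ = −ε⁻¹⟪C ξ, C(H(t))⟫. -/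
open scoped RealInnerProductSpace

section RCLike

open scoped InnerProductSpace Topology

variable {𝕜 W V : Type*} [RCLike 𝕜]
  [NormedAddCommGroup W] [InnerProductSpace 𝕜 W] [NormedSpace ℝ W]
  [NormedAddCommGroup V] [InnerProductSpace 𝕜 V] [NormedSpace ℝ V]

theorem hasDerivAt_const_inner_s16 (η : V) {v : ℝ → V} {v' : V} {t : ℝ} (hv : HasDerivAt v v' t) :
    HasDerivAt (fun s ↦ ⟪η, v s⟫_𝕜) ⟪η, v'⟫_𝕜 t := by
  simpa only [inner_zero_left, add_zero] using (hasDerivAt_const t η).inner 𝕜 hv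

theorem mul_inner_eq_neg_inner_of_hasDerivAt {μ : 𝕜} {ξ : W} {η : V} {u : ℝ → W} {v : ℝ → V}
    {u' : W} {v' : V} {t : ℝ} (hu : HasDerivAt u u' t) (hv : HasDerivAt v v' t)
    (h : ∀ᶠ s in 𝓝 t, μ * ⟪ξ, u s⟫_𝕜 = -⟪η, v s⟫_𝕜) :
    μ * ⟪ξ, u'⟫_𝕜 = -⟪η, v'⟫_𝕜 := by
  have h_left : HasDerivAt (fun s ↦ μ * ⟪ξ, u s⟫_𝕜) (μ * ⟪ξ, u'⟫_𝕜) t :=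
    (hasDerivAt_const_inner_s16 ξ hu).const_mul μ
  have h_right : HasDerivAt (fun s ↦ -⟪η, v s⟫_𝕜) (-⟪η, v'⟫_𝕜) t :=
    (hasDerivAt_const_inner_s16 η hv).neg
  exact h_left.unique (h_right.congr_of_eventuallyEq h)

theorem stmt16_general (C : W → V) {ε : 𝕜} (hε : ε ≠ 0) (μ : 𝕜)
    {H H' : ℝ → W} {H'' : W} {E : ℝ → V} {E' : V} {t : ℝ}
    (_hH : ∀ᶠ s in 𝓝 t, HasDerivAt H (H' s) s) (hH' : HasDerivAt H' H'' t)
    (hE : HasDerivAt E E' t) (hampere : ε • E' = C (H t)) (ξ : W)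
    (hdyn : ∀ᶠ s in 𝓝 t, μ * ⟪ξ, H' s⟫_𝕜 = -⟪C ξ, E s⟫_𝕜) :
    μ * ⟪ξ, H''⟫_𝕜 = -(ε⁻¹ * ⟪C ξ, C (H t)⟫_𝕜) :=
  calc
    μ * ⟪ξ, H''⟫_𝕜 = -⟪C ξ, E'⟫_𝕜 := mul_inner_eq_neg_inner_of_hasDerivAt hH' hE hdyn
    _ = -(ε⁻¹ * ⟪C ξ, ε • E'⟫_𝕜) := by rw [inner_smul_right, inv_mul_cancel_left₀ hε]
    _ = -(ε⁻¹ * ⟪C ξ, C (H t)⟫_𝕜) := by rw [hampere]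

end RCLike

theorem stmt16 {W V : Type*} [NormedAddCommGroup W] [InnerProductSpace ℝ W]
    [NormedAddCommGroup V] [InnerProductSpace ℝ V]
    (C : W →ₗ[ℝ] V) (ε μ : ℝ) (hε : 0 < ε) (hμ : 0 < μ)
    (H : ℝ → W) (E : ℝ → V)
    (hH : Differentiable ℝ H) (hH' : Differentiable ℝ (deriv H))
    (hE : Differentiable ℝ E)
    (hampere : ∀ t : ℝ, ε • deriv E t = C (H t))
    (hdyn : ∀ t : ℝ, ∀ ξ : W, μ * ⟪ξ, deriv H t⟫ = -⟪C ξ, E t⟫) :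
    ∀ t : ℝ, ∀ ξ : W,
      μ * ⟪ξ, deriv (deriv H) t⟫ = -(ε⁻¹ * ⟪C ξ, C (H t)⟫) := fun t ξ ↦
  stmt16_general C hε.ne' μ (.of_forall fun s ↦ (hH s).hasDerivAt) (hH' t).hasDerivAt
    (hE t).hasDerivAt (hampere t) ξ (.of_forall fun s ↦ hdyn s ξ)
end
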